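/- Let n ≥ 1, m ≥ 2, and let u = (u_1,…,u_m) be an m-tuple of C² functions u_i : ℝⁿ → ℝ solving the prescribed mean curvature system −div(∇u_i/√(1+|∇u_i|²)) = H_i(u) on ℝⁿ for every i, and suppose H̃(u(x)) ≤ 0 for all x ∈ ℝⁿ. Then for every α ≥ 2 the function I_α(r) := r^{α−n} ∫_{B_r} [ ∑_{i=1}^m 2(√(1+|∇u_i|²) − 1) − 2H̃(u) ] dx is nondecreasing in r on (0,∞). -/

import Mathlib

open MeasureTheory Metric Finset Filter
open scoped RealInnerProductSpace

noncomputable section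

/-- Divergence of a vector field on Euclidean space. -/
def vdiv {n : ℕ} (F : EuclideanSpace ℝ (Fin n) → EuclideanSpace ℝ (Fin n))
    (x : EuclideanSpace ℝ (Fin n)) : ℝ :=
  ∑ i, fderiv ℝ F x (EuclideanSpace.single i 1) i

/-! Each equation `-div(Φ'(|∇v|²)∇v) = h`, multiplied by the radial derivative `⟪x, ∇v⟫`, turns
into a Pohozaev identity in divergence form: summed over the system, twice the divergence of
`⟪x, ∇uᵢ⟫ Φ'(|∇uᵢ|²) ∇uᵢ` equals `2 ∑ Φ'(|∇uᵢ|²)|∇uᵢ|² + ⟪x, ∇e⟫` with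
`e = ∑ Φ(|∇uᵢ|²) - 2H̃(u)`. These fields point outwards because
`⟪x, ∇uᵢ⟫² Φ'(|∇uᵢ|²) ≥ 0`, so the integral of their divergence over a ball is nonnegative. With
`2sΦ'(s) ≤ αΦ(s)` and `H̃(u) ≤ 0` this gives `∫_{B_r} (αe + ⟪x, ∇e⟫) ≥ 0`, and by scaling this
integral is, up to a positive factor, the derivative of `r^(α-n) ∫_{B_r} e`. -/

section Integration

variable {E F : Type*} [NormedAddCommGroup E] [NormedSpace ℝ E] [FiniteDimensional ℝ E]
  [MeasurableSpace E] [BorelSpace E] {μ : Measure E}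
  [NormedAddCommGroup F]

theorem integrableOn_of_continuous_of_isBounded [IsFiniteMeasureOnCompacts μ] {f : E → F}
    (hf : Continuous f) {s : Set E} (hs : Bornology.IsBounded s) : IntegrableOn f s μ :=
  (hf.continuousOn.integrableOn_compact hs.isCompact_closure).mono_set subset_closure

variable [NormedSpace ℝ F]

theorem integral_fderiv_eq_zero_of_hasCompactSupport [μ.IsAddHaarMeasure] {f : E → F}
    (hf : ContDiff ℝ 1 f) (hc : HasCompactSupport f) (v : E) :
    ∫ x, fderiv ℝ f x v ∂μ = 0 := by
  have hint : Integrable (fun x ↦ fderiv ℝ f x v) μ :=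
    ((hf.continuous_fderiv one_ne_zero).clm_apply continuous_const).integrable_of_hasCompactSupport
      (hc.fderiv_apply (𝕜 := ℝ) v)
  have hparts := integral_smul_fderiv_eq_neg_fderiv_smul_of_integrable (μ := μ)
    (f := fun _ ↦ (1 : ℝ)) (g := f) (v := v) (by simp) (by simpa using hint)
    (by simpa using hf.continuous.integrable_of_hasCompactSupport hc) (by simp)
    (fun x _ ↦ hf.differentiable one_ne_zero x)
  simpa using hparts

theorem setIntegral_unitBall_comp_smul [μ.IsAddHaarMeasure] (f : E → F) {r : ℝ} (hr : 0 < r) :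
    ∫ x in ball (0 : E) 1, f (r • x) ∂μ =
      (r ^ Module.finrank ℝ E)⁻¹ • ∫ x in ball (0 : E) r, f x ∂μ := by
  rw [Measure.setIntegral_comp_smul_of_pos μ f _ hr, smul_unitBall_of_pos hr]

theorem hasDerivAt_setIntegral_comp_smul [IsFiniteMeasureOnCompacts μ] {f : E → F}
    (hf : ContDiff ℝ 1 f) {s : Set E} (hs : Bornology.IsBounded s) (hsm : MeasurableSet s)
    (r : ℝ) :
    HasDerivAt (fun t : ℝ ↦ ∫ x in s, f (t • x) ∂μ)
      (∫ x in s, fderiv ℝ f (r • x) x ∂μ) r := by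
  have hcont : Continuous fun p : ℝ × E ↦ fderiv ℝ f (p.1 • p.2) p.2 :=
    ((hf.continuous_fderiv one_ne_zero).comp (continuous_fst.smul continuous_snd)).clm_apply
      continuous_snd
  obtain ⟨C, hC⟩ := ((isCompact_closedBall r 1).prod
    hs.isCompact_closure).exists_bound_of_continuousOn hcont.continuousOn
  refine (hasDerivAt_integral_of_dominated_loc_of_deriv_le (s := closedBall r 1)
    (bound := fun _ ↦ C) (F := fun t x ↦ f (t • x)) (F' := fun t x ↦ fderiv ℝ f (t • x) x)
    (closedBall_mem_nhds r one_pos) ?_ ?_ ?_ ?_ ?_ ?_).2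
  · exact .of_forall fun t ↦ (hf.continuous.comp (continuous_const_smul t)).aestronglyMeasurable
  · exact integrableOn_of_continuous_of_isBounded
      (hf.continuous.comp (continuous_const_smul r)) hs
  · exact (hcont.comp (Continuous.prodMk_right r)).aestronglyMeasurable
  · exact (ae_restrict_iff' hsm).2
      (.of_forall fun x hx t ht ↦ hC (t, x) ⟨ht, subset_closure hx⟩)
  · exact integrableOn_of_continuous_of_isBounded continuous_const hs
  · refine .of_forall fun x t _ ↦ ?_
    have hsmul : HasDerivAt (fun τ : ℝ ↦ τ • x) x t := by
      simpa using (hasDerivAt_id t).smul_const x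
    exact (hf.differentiable one_ne_zero (t • x)).hasFDerivAt.comp_hasDerivAt t hsmul

end Integration

section Scaling

variable {E : Type*} [NormedAddCommGroup E] [NormedSpace ℝ E] [FiniteDimensional ℝ E]
  [MeasurableSpace E] [BorelSpace E] {μ : Measure E} [μ.IsAddHaarMeasure]

theorem rpow_mul_setIntegral_ball (e : E → ℝ) (α : ℝ) {r : ℝ} (hr : 0 < r) :
    r ^ (α - Module.finrank ℝ E) * ∫ x in ball (0 : E) r, e x ∂μ =
      r ^ α * ∫ x in ball (0 : E) 1, e (r • x) ∂μ := by
  rw [setIntegral_unitBall_comp_smul e hr, Real.rpow_sub hr, Real.rpow_natCast, smul_eq_mul]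
  ring

theorem hasDerivAt_rpow_mul_setIntegral_ball {e : E → ℝ} (he : ContDiff ℝ 1 e) (α : ℝ) {r : ℝ}
    (hr : 0 < r) :
    HasDerivAt (fun t : ℝ ↦ t ^ (α - Module.finrank ℝ E) * ∫ x in ball (0 : E) t, e x ∂μ)
      (r ^ (α - 1 - Module.finrank ℝ E) *
        ∫ x in ball (0 : E) r, (α * e x + fderiv ℝ e x x) ∂μ) r := by
  have hderiv := (Real.hasDerivAt_rpow_const (p := α) (Or.inl hr.ne')).mul
    (hasDerivAt_setIntegral_comp_smul (μ := μ) (s := ball (0 : E) 1) he isBounded_ball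
      measurableSet_ball r)
  have hsplit : ∫ x in ball (0 : E) 1, (α * e (r • x) + fderiv ℝ e (r • x) (r • x)) ∂μ =
      α * ∫ x in ball (0 : E) 1, e (r • x) ∂μ +
        r * ∫ x in ball (0 : E) 1, fderiv ℝ e (r • x) x ∂μ := by
    have hsmul : Continuous fun x : E ↦ r • x := continuous_const_smul r
    simp only [map_smul, smul_eq_mul]
    rw [integral_add, integral_const_mul, integral_const_mul]
    · exact integrableOn_of_continuous_of_isBounded
        (continuous_const.mul (he.continuous.comp hsmul)) isBounded_ball
    · exact integrableOn_of_continuous_of_isBounded (continuous_const.mul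
        (((he.continuous_fderiv one_ne_zero).comp hsmul).clm_apply continuous_id)) isBounded_ball
  have hrpow : r ^ α = r ^ (α - 1) * r := by
    rw [← Real.rpow_add_one hr.ne', sub_add_cancel]
  refine (hderiv.congr_deriv ?_).congr_of_eventuallyEq ?_
  · rw [rpow_mul_setIntegral_ball _ _ hr, hsplit, hrpow]
    ring
  · filter_upwards [lt_mem_nhds hr] with t ht using rpow_mul_setIntegral_ball e α ht

theorem monotoneOn_rpow_mul_setIntegral_ball {e : E → ℝ} (he : ContDiff ℝ 1 e) (α : ℝ)
    (hnonneg : ∀ r, 0 < r → 0 ≤ ∫ x in ball (0 : E) r, (α * e x + fderiv ℝ e x x) ∂μ) :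
    MonotoneOn (fun r : ℝ ↦ r ^ (α - Module.finrank ℝ E) * ∫ x in ball (0 : E) r, e x ∂μ)
      (Set.Ioi 0) := by
  have hderiv (r : ℝ) (hr : 0 < r) := hasDerivAt_rpow_mul_setIntegral_ball (μ := μ) he α hr
  refine monotoneOn_of_hasDerivWithinAt_nonneg (convex_Ioi 0)
    (fun r hr ↦ (hderiv r hr).continuousAt.continuousWithinAt)
    (fun r hr ↦ (hderiv r (interior_subset hr)).hasDerivWithinAt) fun r hr ↦ ?_
  have hr : 0 < r := interior_subset hr
  exact mul_nonneg (Real.rpow_nonneg hr.le _) (hnonneg r hr)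

end Scaling

section Divergence

variable {E : Type*} [NormedAddCommGroup E] [NormedSpace ℝ E]

/-- The divergence of a vector field on a normed space, as the trace of its Fréchet derivative,
so that the calculus of `vdiv` can be carried out without coordinates. -/
def divergence (X : E → E) (x : E) : ℝ :=
  LinearMap.trace ℝ E (fderiv ℝ X x)

theorem vdiv_eq_divergence {n : ℕ} (X : EuclideanSpace ℝ (Fin n) → EuclideanSpace ℝ (Fin n)) :
    vdiv X = divergence X := by
  ext x
  simp [vdiv, divergence, EuclideanSpace.inner_single_left,
    LinearMap.trace_eq_sum_inner _ (EuclideanSpace.basisFun (Fin n) ℝ)]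

variable [FiniteDimensional ℝ E]

theorem continuous_divergence {X : E → E} (hX : ContDiff ℝ 1 X) : Continuous (divergence X) :=
  (LinearMap.trace ℝ E ∘ₗ ContinuousLinearMap.coeLM ℝ).continuous_of_finiteDimensional.comp
    (hX.continuous_fderiv one_ne_zero)

theorem divergence_smul {f : E → ℝ} {X : E → E} {x : E} (hf : DifferentiableAt ℝ f x)
    (hX : DifferentiableAt ℝ X x) :
    divergence (fun y ↦ f y • X y) x = f x * divergence X x + fderiv ℝ f x (X x) := by
  simp only [divergence, fderiv_fun_smul hf hX, ContinuousLinearMap.toLinearMap_add,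
    ContinuousLinearMap.toLinearMap_smul, map_add, map_smul, smul_eq_mul]
  congr 1
  exact LinearMap.trace_smulRight (fderiv ℝ f x : E →ₗ[ℝ] ℝ) (X x)

variable [MeasurableSpace E] [BorelSpace E] {μ : Measure E} [μ.IsAddHaarMeasure]

theorem integral_divergence_eq_zero_of_hasCompactSupport {X : E → E} (hX : ContDiff ℝ 1 X)
    (hc : HasCompactSupport X) : ∫ x, divergence X x ∂μ = 0 := by
  let tr : (E →L[ℝ] E) →L[ℝ] ℝ :=
    (LinearMap.trace ℝ E ∘ₗ ContinuousLinearMap.coeLM ℝ).toContinuousLinearMap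
  have hint : Integrable (fderiv ℝ X) μ :=
    (hX.continuous_fderiv one_ne_zero).integrable_of_hasCompactSupport (hc.fderiv (𝕜 := ℝ))
  have hzero : ∫ x, fderiv ℝ X x ∂μ = 0 := by
    ext v : 1
    rw [ContinuousLinearMap.integral_apply hint,
      integral_fderiv_eq_zero_of_hasCompactSupport hX hc, zero_apply]
  calc ∫ x, divergence X x ∂μ = tr (∫ x, fderiv ℝ X x ∂μ) := tr.integral_comp_comm hint
    _ = 0 := by rw [hzero, map_zero]

theorem integral_mul_divergence_eq_neg {f : E → ℝ} {X : E → E} (hf : ContDiff ℝ 1 f)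
    (hX : ContDiff ℝ 1 X) (hc : HasCompactSupport f) :
    ∫ x, f x * divergence X x ∂μ = -∫ x, fderiv ℝ f x (X x) ∂μ := by
  have hint : Integrable (fun x ↦ f x * divergence X x) μ :=
    (hf.continuous.mul (continuous_divergence hX)).integrable_of_hasCompactSupport hc.mul_right
  have hint' : Integrable (fun x ↦ fderiv ℝ f x (X x)) μ :=
    ((hf.continuous_fderiv one_ne_zero).clm_apply hX.continuous).integrable_of_hasCompactSupport
      ((hc.fderiv (𝕜 := ℝ)).mono fun x hx h ↦ hx (by simp [h]))
  rw [eq_neg_iff_add_eq_zero, ← integral_add hint hint',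
    ← integral_divergence_eq_zero_of_hasCompactSupport (μ := μ) (hf.smul hX) hc.smul_right]
  exact integral_congr_ae (.of_forall fun x ↦ (divergence_smul
    (hf.differentiable one_ne_zero x) (hX.differentiable one_ne_zero x)).symm)

end Divergence

section OutwardFields

variable {E : Type*} [NormedAddCommGroup E]

/-- Smooth radially decreasing cutoffs with support in the closed ball of radius `r` about the
origin; they increase to the indicator of the open ball as `k → ∞`. -/
def ballCutoff (r : ℝ) (k : ℕ) (x : E) : ℝ :=
  Real.smoothTransition (k * (r ^ 2 - ‖x‖ ^ 2))

theorem ballCutoff_eq_zero {r : ℝ} (hr : 0 ≤ r) (k : ℕ) {x : E} (hx : r ≤ ‖x‖) :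
    ballCutoff r k x = 0 :=
  Real.smoothTransition.zero_of_nonpos
    (mul_nonpos_of_nonneg_of_nonpos k.cast_nonneg (sub_nonpos.2 (by gcongr)))

theorem eventually_ballCutoff_eq_one {r : ℝ} {x : E} (hx : ‖x‖ < r) :
    ∀ᶠ k in atTop, ballCutoff r k x = 1 := by
  have hpos : 0 < r ^ 2 - ‖x‖ ^ 2 := sub_pos.2 (by gcongr)
  filter_upwards [(tendsto_natCast_atTop_atTop.atTop_mul_const hpos).eventually_ge_atTop 1]
    with k hk using Real.smoothTransition.one_of_one_le hk

variable [InnerProductSpace ℝ E]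

theorem contDiff_ballCutoff (r : ℝ) (k : ℕ) : ContDiff ℝ 1 (ballCutoff r k : E → ℝ) :=
  (Real.smoothTransition.contDiff (n := 1)).comp
    (contDiff_const.mul (contDiff_const.sub (contDiff_norm_sq ℝ)))

theorem fderiv_ballCutoff_nonpos (r : ℝ) (k : ℕ) {x v : E} (hv : 0 ≤ ⟪x, v⟫) :
    fderiv ℝ (ballCutoff r k) x v ≤ 0 := by
  have hinner : HasFDerivAt (fun y : E ↦ (k : ℝ) * (r ^ 2 - ‖y‖ ^ 2)) _ x :=
    ((hasStrictFDerivAt_norm_sq x).hasFDerivAt.const_sub (r ^ 2)).const_mul (k : ℝ)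
  have houter : HasDerivAt Real.smoothTransition _ (k * (r ^ 2 - ‖x‖ ^ 2)) :=
    ((Real.smoothTransition.contDiff (n := 1)).differentiable one_ne_zero _).hasDerivAt
  have hcutoff : HasFDerivAt (ballCutoff r k) _ x := houter.comp_hasFDerivAt x hinner
  have hderiv : 0 ≤ deriv Real.smoothTransition (k * (r ^ 2 - ‖x‖ ^ 2)) :=
    Real.smoothTransition.monotone.deriv_nonneg
  rw [hcutoff.fderiv]
  simp only [smul_apply, neg_apply, coe_innerSL_apply, nsmul_eq_mul, smul_eq_mul, Nat.cast_ofNat]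
  have : 0 ≤ deriv Real.smoothTransition (k * (r ^ 2 - ‖x‖ ^ 2)) * (k * (2 * ⟪x, v⟫)) := by
    positivity
  linarith

variable [FiniteDimensional ℝ E]

theorem hasCompactSupport_ballCutoff {r : ℝ} (hr : 0 ≤ r) (k : ℕ) :
    HasCompactSupport (ballCutoff r k : E → ℝ) :=
  .intro (isCompact_closedBall 0 r) fun x hx ↦
    ballCutoff_eq_zero hr k (by simpa using (not_le.1 (mt mem_closedBall.2 hx)).le)

variable [MeasurableSpace E] [BorelSpace E] {μ : Measure E}

theorem tendsto_integral_ballCutoff_mul [IsFiniteMeasureOnCompacts μ] {f : E → ℝ}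
    (hf : Continuous f) {r : ℝ} (hr : 0 ≤ r) :
    Tendsto (fun k ↦ ∫ x, ballCutoff r k x * f x ∂μ) atTop
      (nhds (∫ x in ball (0 : E) r, f x ∂μ)) := by
  rw [← integral_indicator measurableSet_ball]
  refine tendsto_integral_of_dominated_convergence
    ((ball (0 : E) r).indicator fun x ↦ |f x|) (fun k ↦ ?_) ?_
    (fun k ↦ .of_forall fun x ↦ ?_) (.of_forall fun x ↦ ?_)
  · exact ((contDiff_ballCutoff r k).continuous.mul hf).aestronglyMeasurable
  · exact (integrable_indicator_iff measurableSet_ball).2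
      (integrableOn_of_continuous_of_isBounded hf.abs isBounded_ball)
  · by_cases hx : x ∈ ball (0 : E) r
    · rw [Set.indicator_of_mem hx, Real.norm_eq_abs, abs_mul,
        abs_of_nonneg (a := ballCutoff r k x) (Real.smoothTransition.nonneg _)]
      exact mul_le_of_le_one_left (abs_nonneg _) (Real.smoothTransition.le_one _)
    · simp [hx, ballCutoff_eq_zero hr k (by simpa using hx)]
  · by_cases hx : x ∈ ball (0 : E) r
    · rw [Set.indicator_of_mem hx]
      refine tendsto_const_nhds.congr' ?_
      filter_upwards [eventually_ballCutoff_eq_one (mem_ball_zero_iff.1 hx)] with k hk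
      rw [hk, one_mul]
    · simp [hx, ballCutoff_eq_zero hr _ (by simpa using hx)]

theorem setIntegral_divergence_ball_nonneg [μ.IsAddHaarMeasure] {X : E → E}
    (hX : ContDiff ℝ 1 X) (hout : ∀ x, 0 ≤ ⟪x, X x⟫) {r : ℝ} (hr : 0 ≤ r) :
    0 ≤ ∫ x in ball (0 : E) r, divergence X x ∂μ := by
  refine ge_of_tendsto' (tendsto_integral_ballCutoff_mul (continuous_divergence hX) hr)
    fun k ↦ ?_
  rw [integral_mul_divergence_eq_neg (contDiff_ballCutoff r k) hX
    (hasCompactSupport_ballCutoff hr k), ← integral_neg]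
  exact integral_nonneg fun x ↦ neg_nonneg.2 (fderiv_ballCutoff_nonpos r k (hout x))

end OutwardFields

section Pohozaev

variable {E : Type*} [NormedAddCommGroup E] [InnerProductSpace ℝ E] [CompleteSpace E]

theorem contDiff_gradient {k l : WithTop ℕ∞} {v : E → ℝ} (hv : ContDiff ℝ l v)
    (hkl : k + 1 ≤ l) : ContDiff ℝ k (gradient v) :=
  (InnerProductSpace.toDual ℝ E).symm.contDiff.comp (hv.fderiv_right hkl)

theorem inner_fderiv_gradient {v : E → ℝ} {x : E} (hv : DifferentiableAt ℝ (fderiv ℝ v) x)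
    (a b : E) : ⟪fderiv ℝ (gradient v) x a, b⟫ = fderiv ℝ (fderiv ℝ v) x a b := by
  have hgrad : HasFDerivAt (gradient v) _ x :=
    ((InnerProductSpace.toDual ℝ E).symm.toContinuousLinearEquiv
      |>.toContinuousLinearMap |>.hasFDerivAt).comp x hv.hasFDerivAt
  rw [hgrad.fderiv]
  exact InnerProductSpace.toDual_symm_apply

theorem inner_fderiv_gradient_comm {v : E → ℝ} {x : E} (hv : ContDiffAt ℝ 2 v x) (a b : E) :
    ⟪fderiv ℝ (gradient v) x a, b⟫ = ⟪fderiv ℝ (gradient v) x b, a⟫ := by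
  have hd : DifferentiableAt ℝ (fderiv ℝ v) x :=
    (hv.fderiv_right (m := 1) (by norm_num)).differentiableAt one_ne_zero
  rw [inner_fderiv_gradient hd, inner_fderiv_gradient hd]
  exact hv.isSymmSndFDerivAt (by simp) a b

theorem fderiv_comp_norm_sq {G F : Type*} [NormedAddCommGroup G] [NormedSpace ℝ G]
    [NormedAddCommGroup F] [InnerProductSpace ℝ F] {Φ : ℝ → ℝ} {g : G → F} {x : G}
    (hΦ : DifferentiableAt ℝ Φ (‖g x‖ ^ 2)) (hg : DifferentiableAt ℝ g x) (a : G) :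
    fderiv ℝ (fun y ↦ Φ (‖g y‖ ^ 2)) x a =
      2 * deriv Φ (‖g x‖ ^ 2) * ⟪g x, fderiv ℝ g x a⟫ := by
  have hcomp : HasFDerivAt (fun y ↦ Φ (‖g y‖ ^ 2)) _ x :=
    hΦ.hasDerivAt.comp_hasFDerivAt x hg.hasFDerivAt.norm_sq
  rw [hcomp.fderiv]
  simp only [smul_apply, ContinuousLinearMap.comp_apply, coe_innerSL_apply, nsmul_eq_mul,
    Nat.cast_ofNat, smul_eq_mul]
  ring

/-- The flux `Φ'(|∇v|²)∇v` of the quasilinear operator `v ↦ div(Φ'(|∇v|²)∇v)`. -/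
def quasilinearFlux (Φ : ℝ → ℝ) (v : E → ℝ) (x : E) : E :=
  deriv Φ (‖gradient v x‖ ^ 2) • gradient v x

/-- The flux of `v` weighted by the Pohozaev multiplier `⟪x, ∇v⟫`. -/
def pohozaevField (Φ : ℝ → ℝ) (v : E → ℝ) (x : E) : E :=
  ⟪x, gradient v x⟫ • quasilinearFlux Φ v x

theorem inner_self_pohozaevField_nonneg {Φ : ℝ → ℝ} (hΦ : ∀ s, 0 ≤ s → 0 ≤ deriv Φ s)
    (v : E → ℝ) (x : E) : 0 ≤ ⟪x, pohozaevField Φ v x⟫ := by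
  have hderiv := hΦ _ (sq_nonneg ‖gradient v x‖)
  calc 0 ≤ deriv Φ (‖gradient v x‖ ^ 2) * ⟪x, gradient v x⟫ ^ 2 := by positivity
    _ = ⟪x, pohozaevField Φ v x⟫ := by
      simp only [pohozaevField, quasilinearFlux, inner_smul_right]
      ring

variable {Φ : ℝ → ℝ} {v : E → ℝ}

theorem contDiff_comp_norm_gradient_sq {k : WithTop ℕ∞} {f : ℝ → ℝ}
    (hf : ∀ s, 0 ≤ s → ContDiffAt ℝ k f s) (hv : ContDiff ℝ (k + 1) v) :
    ContDiff ℝ k (fun x ↦ f (‖gradient v x‖ ^ 2)) :=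
  contDiff_iff_contDiffAt.2 fun x ↦ (hf _ (sq_nonneg _)).comp x
    ((contDiff_gradient hv le_rfl).norm_sq ℝ).contDiffAt

theorem contDiff_quasilinearFlux (hΦ : ∀ s, 0 ≤ s → ContDiffAt ℝ 2 Φ s)
    (hv : ContDiff ℝ 2 v) : ContDiff ℝ 1 (quasilinearFlux Φ v) :=
  (contDiff_comp_norm_gradient_sq (fun s hs ↦ (hΦ s hs).derivWithin (by norm_num)) hv).smul
    (contDiff_gradient hv (by norm_num))

theorem contDiff_pohozaevField (hΦ : ∀ s, 0 ≤ s → ContDiffAt ℝ 2 Φ s)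
    (hv : ContDiff ℝ 2 v) : ContDiff ℝ 1 (pohozaevField Φ v) :=
  (contDiff_id.inner ℝ (contDiff_gradient hv (by norm_num))).smul (contDiff_quasilinearFlux hΦ hv)

theorem two_mul_divergence_pohozaevField [FiniteDimensional ℝ E]
    (hΦ : ∀ s, 0 ≤ s → ContDiffAt ℝ 2 Φ s) (hv : ContDiff ℝ 2 v) (x : E) :
    2 * divergence (pohozaevField Φ v) x =
      2 * ⟪x, gradient v x⟫ * divergence (quasilinearFlux Φ v) x
        + 2 * (‖gradient v x‖ ^ 2 * deriv Φ (‖gradient v x‖ ^ 2))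
        + fderiv ℝ (fun y ↦ Φ (‖gradient v y‖ ^ 2)) x x := by
  have hgrad : DifferentiableAt ℝ (gradient v) x :=
    (contDiff_gradient (k := 1) hv (by norm_num)).differentiable one_ne_zero x
  have hflux : DifferentiableAt ℝ (quasilinearFlux Φ v) x :=
    (contDiff_quasilinearFlux hΦ hv).differentiable one_ne_zero x
  have hhess : ⟪x, fderiv ℝ (gradient v) x (gradient v x)⟫ =
      ⟪gradient v x, fderiv ℝ (gradient v) x x⟫ := by
    rw [real_inner_comm, inner_fderiv_gradient_comm hv.contDiffAt, real_inner_comm]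
  have hradial : fderiv ℝ (fun y ↦ ⟪y, gradient v y⟫) x (gradient v x) =
      ⟪gradient v x, fderiv ℝ (gradient v) x x⟫ + ‖gradient v x‖ ^ 2 := by
    rw [fderiv_inner_apply ℝ differentiableAt_fun_id hgrad, hhess]
    simp
  have hdiv : divergence (pohozaevField Φ v) x =
      ⟪x, gradient v x⟫ * divergence (quasilinearFlux Φ v) x
        + fderiv ℝ (fun y ↦ ⟪y, gradient v y⟫) x (quasilinearFlux Φ v x) :=
    divergence_smul (differentiableAt_fun_id.inner ℝ hgrad) hflux
  rw [hdiv, quasilinearFlux, map_smul, hradial,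
    fderiv_comp_norm_sq ((hΦ _ (sq_nonneg _)).differentiableAt two_ne_zero) hgrad, smul_eq_mul]
  ring

end Pohozaev

section Energy

variable {ι : Type*} [Fintype ι]

theorem fderiv_comp_pi_apply [DecidableEq ι] {E : Type*} [NormedAddCommGroup E]
    [NormedSpace ℝ E] {f : (ι → ℝ) → ℝ} {u : ι → E → ℝ} {x : E}
    (hf : DifferentiableAt ℝ f (fun j ↦ u j x)) (hu : ∀ i, DifferentiableAt ℝ (u i) x) (a : E) :
    fderiv ℝ (fun y ↦ f (fun j ↦ u j y)) x a =
      ∑ i, fderiv ℝ f (fun j ↦ u j x) (Pi.single i 1) * fderiv ℝ (u i) x a := by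
  have hcomp : HasFDerivAt (fun y ↦ f (fun j ↦ u j y)) _ x :=
    hf.hasFDerivAt.comp x (hasFDerivAt_pi.2 fun i ↦ (hu i).hasFDerivAt)
  have hsum : (fun i ↦ fderiv ℝ (u i) x a) = ∑ i, fderiv ℝ (u i) x a • Pi.single i (1 : ℝ) :=
    pi_eq_sum_univ' _
  calc fderiv ℝ (fun y ↦ f (fun j ↦ u j y)) x a
      = fderiv ℝ f (fun j ↦ u j x) (fun i ↦ fderiv ℝ (u i) x a) := by rw [hcomp.fderiv]; rfl
    _ = ∑ i, fderiv ℝ f (fun j ↦ u j x) (Pi.single i 1) * fderiv ℝ (u i) x a := by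
      simp only [hsum, map_sum, map_smul, smul_eq_mul, mul_comm]

variable {E : Type*} [NormedAddCommGroup E] [InnerProductSpace ℝ E] [CompleteSpace E]

/-- The energy density `∑ᵢ Φ(|∇uᵢ|²) - 2H̃(u)` of the system `-div(Φ'(|∇uᵢ|²)∇uᵢ) = ∂ᵢH̃(u)`. -/
def energyDensity (Φ : ℝ → ℝ) (Ht : (ι → ℝ) → ℝ) (u : ι → E → ℝ) (x : E) : ℝ :=
  ∑ i, Φ (‖gradient (u i) x‖ ^ 2) - 2 * Ht (fun j ↦ u j x)

variable {Φ : ℝ → ℝ} {Ht : (ι → ℝ) → ℝ} {u : ι → E → ℝ}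

theorem contDiff_energyDensity (hΦ : ∀ s, 0 ≤ s → ContDiffAt ℝ 1 Φ s) (hHt : ContDiff ℝ 1 Ht)
    (hu : ∀ i, ContDiff ℝ 2 (u i)) : ContDiff ℝ 1 (energyDensity Φ Ht u) :=
  (ContDiff.sum fun i _ ↦ contDiff_comp_norm_gradient_sq hΦ (hu i)).sub
    (contDiff_const.mul (hHt.comp (contDiff_pi.2 fun i ↦ (hu i).of_le one_le_two)))

variable [DecidableEq ι] {H : ι → (ι → ℝ) → ℝ}

theorem fderiv_energyDensity_self (hΦ : ∀ s, 0 ≤ s → ContDiffAt ℝ 1 Φ s) (hHt : ContDiff ℝ 1 Ht)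
    (hHtgrad : ∀ i y, fderiv ℝ Ht y (Pi.single i 1) = H i y)
    (hu : ∀ i, ContDiff ℝ 2 (u i)) (x : E) :
    fderiv ℝ (energyDensity Φ Ht u) x x =
      ∑ i, fderiv ℝ (fun y ↦ Φ (‖gradient (u i) y‖ ^ 2)) x x
        - 2 * ∑ i, H i (fun j ↦ u j x) * ⟪x, gradient (u i) x⟫ := by
  have hdu (i : ι) : DifferentiableAt ℝ (u i) x := (hu i).differentiable two_ne_zero x
  have hdΦ (i : ι) : DifferentiableAt ℝ (fun y ↦ Φ (‖gradient (u i) y‖ ^ 2)) x :=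
    (contDiff_comp_norm_gradient_sq hΦ (hu i)).differentiable one_ne_zero x
  have hdHt : DifferentiableAt ℝ Ht (fun j ↦ u j x) := hHt.differentiable one_ne_zero _
  have hdHtu : DifferentiableAt ℝ (fun y ↦ Ht (fun j ↦ u j y)) x :=
    hdHt.comp x (differentiableAt_pi.2 hdu)
  have henergy : HasFDerivAt (energyDensity Φ Ht u) _ x :=
    (HasFDerivAt.fun_sum fun i (_ : i ∈ univ) ↦ (hdΦ i).hasFDerivAt).sub
      (hdHtu.hasFDerivAt.const_mul 2)
  rw [henergy.fderiv]
  simp [fderiv_comp_pi_apply hdHt hdu, hHtgrad, inner_gradient_right]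

theorem sum_two_mul_divergence_pohozaevField [FiniteDimensional ℝ E]
    (hΦ : ∀ s, 0 ≤ s → ContDiffAt ℝ 2 Φ s) (hHt : ContDiff ℝ 1 Ht)
    (hHtgrad : ∀ i y, fderiv ℝ Ht y (Pi.single i 1) = H i y) (hu : ∀ i, ContDiff ℝ 2 (u i))
    (hsol : ∀ i x, -divergence (quasilinearFlux Φ (u i)) x = H i (fun j ↦ u j x)) (x : E) :
    ∑ i, 2 * divergence (pohozaevField Φ (u i)) x =
      ∑ i, 2 * (‖gradient (u i) x‖ ^ 2 * deriv Φ (‖gradient (u i) x‖ ^ 2))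
        + fderiv ℝ (energyDensity Φ Ht u) x x := by
  rw [fderiv_energyDensity_self (fun s hs ↦ (hΦ s hs).of_le one_le_two) hHt hHtgrad hu, mul_sum,
    ← sum_sub_distrib, ← sum_add_distrib]
  refine sum_congr rfl fun i _ ↦ ?_
  rw [two_mul_divergence_pohozaevField hΦ (hu i), ← hsol]
  ring

theorem sum_two_mul_divergence_pohozaevField_le [FiniteDimensional ℝ E] {α : ℝ} (hα : 0 ≤ α)
    (hΦ : ∀ s, 0 ≤ s → ContDiffAt ℝ 2 Φ s)
    (hΦα : ∀ s, 0 ≤ s → 2 * (s * deriv Φ s) ≤ α * Φ s) (hHt : ContDiff ℝ 1 Ht)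
    (hHtgrad : ∀ i y, fderiv ℝ Ht y (Pi.single i 1) = H i y) (hu : ∀ i, ContDiff ℝ 2 (u i))
    (hsol : ∀ i x, -divergence (quasilinearFlux Φ (u i)) x = H i (fun j ↦ u j x))
    {x : E} (hneg : Ht (fun j ↦ u j x) ≤ 0) :
    ∑ i, 2 * divergence (pohozaevField Φ (u i)) x ≤
      α * energyDensity Φ Ht u x + fderiv ℝ (energyDensity Φ Ht u) x x := by
  rw [sum_two_mul_divergence_pohozaevField hΦ hHt hHtgrad hu hsol]
  gcongr
  calc ∑ i, 2 * (‖gradient (u i) x‖ ^ 2 * deriv Φ (‖gradient (u i) x‖ ^ 2))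
      ≤ ∑ i, α * Φ (‖gradient (u i) x‖ ^ 2) := sum_le_sum fun i _ ↦ hΦα _ (sq_nonneg _)
    _ = α * ∑ i, Φ (‖gradient (u i) x‖ ^ 2) := (mul_sum ..).symm
    _ ≤ α * energyDensity Φ Ht u x :=
      mul_le_mul_of_nonneg_left (by unfold energyDensity; linarith) hα

end Energy

theorem weak_monotonicity_mean_curvature_general {E ι : Type*} [NormedAddCommGroup E]
    [InnerProductSpace ℝ E] [FiniteDimensional ℝ E] [MeasurableSpace E] [BorelSpace E]
    {μ : Measure E} [μ.IsAddHaarMeasure] [Fintype ι] [DecidableEq ι]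
    {Φ : ℝ → ℝ} (hΦ : ∀ s, 0 ≤ s → ContDiffAt ℝ 2 Φ s) (hΦ' : ∀ s, 0 ≤ s → 0 ≤ deriv Φ s)
    {α : ℝ} (hα : 0 ≤ α) (hΦα : ∀ s, 0 ≤ s → 2 * (s * deriv Φ s) ≤ α * Φ s)
    {H : ι → (ι → ℝ) → ℝ} {Ht : (ι → ℝ) → ℝ} (hHt : ContDiff ℝ 1 Ht)
    (hHtgrad : ∀ i y, fderiv ℝ Ht y (Pi.single i 1) = H i y)
    {u : ι → E → ℝ} (hu : ∀ i, ContDiff ℝ 2 (u i))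
    (hsol : ∀ i x, -divergence (quasilinearFlux Φ (u i)) x = H i (fun j ↦ u j x))
    (hneg : ∀ x, Ht (fun j ↦ u j x) ≤ 0) :
    MonotoneOn (fun r : ℝ ↦ r ^ (α - Module.finrank ℝ E) *
      ∫ x in ball (0 : E) r, energyDensity Φ Ht u x ∂μ) (Set.Ioi 0) := by
  have he : ContDiff ℝ 1 (energyDensity Φ Ht u) :=
    contDiff_energyDensity (fun s hs ↦ (hΦ s hs).of_le one_le_two) hHt hu
  have hX (i : ι) : ContDiff ℝ 1 (pohozaevField Φ (u i)) := contDiff_pohozaevField hΦ (hu i)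
  refine monotoneOn_rpow_mul_setIntegral_ball he α fun r hr ↦ ?_
  have hint (i : ι) :
      IntegrableOn (fun x ↦ 2 * divergence (pohozaevField Φ (u i)) x) (ball 0 r) μ :=
    integrableOn_of_continuous_of_isBounded
      (continuous_const.mul (continuous_divergence (hX i))) isBounded_ball
  have hdiv : 0 ≤ ∫ x in ball (0 : E) r, ∑ i, 2 * divergence (pohozaevField Φ (u i)) x ∂μ := by
    simp_rw [integral_finsetSum _ fun i _ ↦ hint i, integral_const_mul]
    exact sum_nonneg fun i _ ↦ mul_nonneg zero_le_two
      (setIntegral_divergence_ball_nonneg (hX i) (inner_self_pohozaevField_nonneg hΦ' (u i)) hr.le)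
  refine hdiv.trans (setIntegral_mono (integrable_finsetSum _ fun i _ ↦ hint i) ?_ fun x ↦
    sum_two_mul_divergence_pohozaevField_le hα hΦ hΦα hHt hHtgrad hu hsol (hneg x))
  exact integrableOn_of_continuous_of_isBounded ((continuous_const.mul he.continuous).add
    ((he.continuous_fderiv one_ne_zero).clm_apply continuous_id)) isBounded_ball

section MeanCurvature

/-- The function `Φ` with `Φ'(s) = 1/√(1+s)`, for which `quasilinearFlux Φ` is the flux of the mean
curvature operator. -/
def meanCurvaturePotential (s : ℝ) : ℝ :=
  2 * (Real.sqrt (1 + s) - 1)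

theorem contDiffAt_meanCurvaturePotential {k : WithTop ℕ∞} {s : ℝ} (hs : 0 ≤ s) :
    ContDiffAt ℝ k meanCurvaturePotential s :=
  contDiffAt_const.mul (((contDiffAt_const.add contDiffAt_id).sqrt (by positivity)).sub
    contDiffAt_const)

theorem deriv_meanCurvaturePotential {s : ℝ} (hs : 0 ≤ s) :
    deriv meanCurvaturePotential s = (Real.sqrt (1 + s))⁻¹ := by
  have h : HasDerivAt meanCurvaturePotential _ s :=
    ((((hasDerivAt_id s).const_add 1).sqrt (by positivity)).sub_const 1).const_mul 2
  rw [h.deriv, id]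
  field_simp

theorem deriv_meanCurvaturePotential_nonneg {s : ℝ} (hs : 0 ≤ s) :
    0 ≤ deriv meanCurvaturePotential s := by
  rw [deriv_meanCurvaturePotential hs]
  positivity

theorem two_mul_mul_deriv_meanCurvaturePotential_le {α s : ℝ} (hα : 2 ≤ α) (hs : 0 ≤ s) :
    2 * (s * deriv meanCurvaturePotential s) ≤ α * meanCurvaturePotential s := by
  have hone : 1 ≤ Real.sqrt (1 + s) := Real.one_le_sqrt.2 (by linarith)
  have hsq : Real.sqrt (1 + s) ^ 2 = 1 + s := Real.sq_sqrt (by linarith)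
  have hle : s * deriv meanCurvaturePotential s ≤ meanCurvaturePotential s := by
    rw [deriv_meanCurvaturePotential hs, meanCurvaturePotential, mul_inv_le_iff₀ (by linarith)]
    nlinarith
  have hnonneg : 0 ≤ meanCurvaturePotential s := mul_nonneg zero_le_two (sub_nonneg.2 hone)
  calc 2 * (s * deriv meanCurvaturePotential s) ≤ 2 * meanCurvaturePotential s := by gcongr
    _ ≤ α * meanCurvaturePotential s := by gcongr

theorem quasilinearFlux_meanCurvaturePotential {E : Type*} [NormedAddCommGroup E]
    [InnerProductSpace ℝ E] [CompleteSpace E] (v : E → ℝ) :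
    quasilinearFlux meanCurvaturePotential v =
      fun x ↦ (Real.sqrt (1 + ‖gradient v x‖ ^ 2))⁻¹ • gradient v x := by
  ext1 x
  rw [quasilinearFlux, deriv_meanCurvaturePotential (sq_nonneg _)]

end MeanCurvature

/-- **Weak monotonicity formula for the prescribed mean curvature system**:
for a solution of `-div(∇uᵢ/√(1+|∇uᵢ|²)) = Hᵢ(u)` with `H̃(u) ≤ 0` and `α ≥ 2`,
the function `I_α(r) = r^{α-n} ∫_{B_r} (∑ᵢ 2(√(1+|∇uᵢ|²)-1) - 2H̃(u))`
is nondecreasing in `r`. -/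
theorem weak_monotonicity_mean_curvature
    (n m : ℕ) (hn : 1 ≤ n) (hm : 2 ≤ m)
    (H : Fin m → (Fin m → ℝ) → ℝ) (hH : ∀ i, ContDiff ℝ 1 (H i))
    (Ht : (Fin m → ℝ) → ℝ) (hHt : ContDiff ℝ 2 Ht)
    (hHtgrad : ∀ i y, fderiv ℝ Ht y (Pi.single i 1) = H i y)
    (u : Fin m → EuclideanSpace ℝ (Fin n) → ℝ)
    (hu : ∀ i, ContDiff ℝ 2 (u i))
    (hsol : ∀ i x, -vdiv (fun y =>
        (Real.sqrt (1 + ‖gradient (u i) y‖ ^ 2))⁻¹ • gradient (u i) y) x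
        = H i (fun j => u j x))
    (hHneg : ∀ x : EuclideanSpace ℝ (Fin n), Ht (fun j => u j x) ≤ 0)
    (α : ℝ) (hα : 2 ≤ α) :
    ∀ r₁ r₂ : ℝ, 0 < r₁ → r₁ ≤ r₂ →
      r₁ ^ (α - (n : ℝ)) * (∫ x in ball (0 : EuclideanSpace ℝ (Fin n)) r₁,
          ((∑ i, 2 * (Real.sqrt (1 + ‖gradient (u i) x‖ ^ 2) - 1))
            - 2 * Ht (fun j => u j x)))
        ≤ r₂ ^ (α - (n : ℝ)) * (∫ x in ball (0 : EuclideanSpace ℝ (Fin n)) r₂,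
          ((∑ i, 2 * (Real.sqrt (1 + ‖gradient (u i) x‖ ^ 2) - 1))
            - 2 * Ht (fun j => u j x))) := by
  have hmono := weak_monotonicity_mean_curvature_general (μ := volume)
    (fun _ ↦ contDiffAt_meanCurvaturePotential) (fun _ ↦ deriv_meanCurvaturePotential_nonneg)
    (zero_le_two.trans hα) (fun _ ↦ two_mul_mul_deriv_meanCurvaturePotential_le hα)
    (hHt.of_le one_le_two) hHtgrad hu (fun i x ↦ by
      rw [← hsol i x, quasilinearFlux_meanCurvaturePotential, vdiv_eq_divergence]) hHneg
  intro r₁ r₂ hr₁ hr₁₂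
  simpa only [finrank_euclideanSpace_fin, energyDensity, meanCurvaturePotential] using
    hmono hr₁ (hr₁.trans_le hr₁₂) hr₁₂
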